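/- arXiv:1601.05480 — 3 statements merged into one kernel-verified Lean document; each statement's English description precedes it below -/
import Mathlib

section
/- Let c ∈ ℝ and let f_i(x) = a_i x + b_i (i ∈ [n]) be monotone nondecreasing linear functions, none of which is the identity (a_i ≥ 0 and (a_i, b_i) ≠ (1, 0)). If ∏_{i=1}^n a_i < 1, then there exists a permutation σ of [n] that is optimal for the maximum total composition ordering problem ((f_i)_{i∈[n]}, c) and integers 0 ≤ s ≤ t ≤ n such that δ(f_{σ(i)}) = +1 for all i ∈ {1,…,s} ∪ {t+1,…,n}, δ(f_{σ(i)}) = −1 for all i ∈ {s+1,…,t}, γ(f_{σ(t+1)}) ≤ ⋯ ≤ γ(f_{σ(n)}) ≤ γ(f_{σ(1)}) ≤ ⋯ ≤ γ(f_{σ(s)}), and γ(f_{σ(s+1)}) ≤ ⋯ ≤ γ(f_{σ(t)}). -/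
/-!
The slope of a composition does not depend on the order, so an order is optimal for every `c` at
once iff it maximises the intercept. Swapping two adjacent blocks changes the intercept by a
nonnegative multiple of the determinant `cross` of the plane vectors (1 - slope, intercept) of the
two blocks. Among the optimal orders take the one whose sequence of `δ` is lexicographically
greatest and, among those, whose sequence of `γ` is lexicographically least. It has the required
shape:

* Neighbours of equal `δ` are sorted by `γ`, because swapping an unsorted pair never decreases the
  intercept.
* No block `P` of `δ = +1` lies between two functions of `δ = -1`. Otherwise write the order as
  `F, M, P, N, G`, with `M` and `N` of slope `< 1` and `F` and `G` of slope `≥ 1`: a prefix or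
  suffix of slope `< 1` is absorbed into `M` or `N`. The linear relation between the vectors of the
  three inner blocks shows that moving `P` in front of `M` keeps the order optimal, or the total
  slope would be at least `1`; and this move makes the sequence of `δ` greater.
* Let `p` be the fixed point of the optimal composition. The fixed point of each rotation of the
  order is a point of the orbit of `p`, and by optimality it is at most `p`. So the first function
  maps `p` to a point `≤ p`, and the last one maps a point `≤ p` to `p`; if both have `δ = +1`,
  then `γ(last) ≤ p ≤ γ(first)`.
-/

/-- `compSeq f σ k c = f (σ k) ∘ ⋯ ∘ f (σ 1) (c)` (0-indexed: applies `f (σ 0)` first). -/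
def compSeq {n : ℕ} (f : Fin n → ℝ → ℝ) (σ : Fin n → Fin n) (k : ℕ) (c : ℝ) : ℝ :=
  (((List.finRange n).take k).map σ).foldl (fun x i => f i x) c

/-- `γ` of the linear function `x ↦ a x + b`: the fixed point `b / (1 - a)` if `a ≠ 1`,
`+∞` if `a = 1` and `b < 0`, `-∞` if `a = 1` and `b ≥ 0`. -/
noncomputable def gam (a b : ℝ) : EReal :=
  if a = 1 then (if b < 0 then (⊤ : EReal) else (⊥ : EReal))
  else ((b / (1 - a) : ℝ) : EReal)

/-- `δ` of the linear function `x ↦ a x + b`: `+1` if `a ≥ 1`, `-1` if `a < 1`. -/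
noncomputable def del (a : ℝ) : ℤ := if 1 ≤ a then 1 else -1

namespace CompositionOrdering

/-! ### Slopes and intercepts -/

section Ring

variable {ι R : Type*} [CommRing R]

/-- The slope of the composition of the functions `x ↦ a i * x + b i` along a list of indices. -/
def compSlope (a : ι → R) (l : List ι) : R := (l.map a).prod

/-- The intercept of the composition of the functions `x ↦ a i * x + b i` along a list of indices,
the head of the list being applied first. -/
def compIntercept (a b : ι → R) (l : List ι) : R := l.foldl (fun x i => a i * x + b i) 0

/-- The determinant of the vectors (1 - slope, intercept) of two blocks of indices: the amount by
which the intercept of `l₁ ++ l₂` exceeds that of `l₂ ++ l₁`. -/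
def cross (a b : ι → R) (l₁ l₂ : List ι) : R :=
  (1 - compSlope a l₁) * compIntercept a b l₂ - (1 - compSlope a l₂) * compIntercept a b l₁

variable (a b : ι → R)

@[simp] lemma compSlope_nil : compSlope a [] = 1 := rfl

@[simp] lemma compSlope_cons (i : ι) (l : List ι) : compSlope a (i :: l) = a i * compSlope a l := by
  simp [compSlope]

@[simp] lemma compSlope_append (l₁ l₂ : List ι) :
    compSlope a (l₁ ++ l₂) = compSlope a l₁ * compSlope a l₂ := by
  simp [compSlope]

variable {a} in
lemma compSlope_eq_of_perm {l₁ l₂ : List ι} (h : l₁.Perm l₂) : compSlope a l₁ = compSlope a l₂ :=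
  (h.map a).prod_eq

lemma foldl_eq_compSlope_mul_add_compIntercept (l : List ι) (c : R) :
    l.foldl (fun x i => a i * x + b i) c = compSlope a l * c + compIntercept a b l := by
  induction l generalizing c with
  | nil => simp [compIntercept]
  | cons i l ih =>
    rw [compIntercept, List.foldl_cons, List.foldl_cons, ih, ih (a i * 0 + b i), compSlope_cons]
    ring

@[simp] lemma compIntercept_append (l₁ l₂ : List ι) :
    compIntercept a b (l₁ ++ l₂) =
      compSlope a l₂ * compIntercept a b l₁ + compIntercept a b l₂ := by
  rw [compIntercept, List.foldl_append, foldl_eq_compSlope_mul_add_compIntercept, ← compIntercept]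

@[simp] lemma compIntercept_singleton (i : ι) : compIntercept a b [i] = b i := by
  simp [compIntercept]

lemma compIntercept_swap (F l₁ l₂ G : List ι) :
    compIntercept a b (F ++ l₁ ++ l₂ ++ G) =
      compIntercept a b (F ++ l₂ ++ l₁ ++ G) + compSlope a G * cross a b l₁ l₂ := by
  simp only [compIntercept_append, cross]
  ring

lemma cross_append_left (l₁ l₂ l₃ : List ι) :
    cross a b (l₁ ++ l₂) l₃ = compSlope a l₂ * cross a b l₁ l₃ + cross a b l₂ l₃ := by
  simp only [cross, compSlope_append, compIntercept_append]
  ring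

lemma cross_append_right (l₁ l₂ l₃ : List ι) :
    cross a b l₁ (l₂ ++ l₃) = compSlope a l₃ * cross a b l₁ l₂ + cross a b l₁ l₃ := by
  simp only [cross, compSlope_append, compIntercept_append]
  ring

lemma one_sub_compSlope_mul_cross_add (l₁ l₂ l₃ : List ι) :
    (1 - compSlope a l₁) * cross a b l₂ l₃ + (1 - compSlope a l₃) * cross a b l₁ l₂ =
      (1 - compSlope a l₂) * cross a b l₁ l₃ := by
  simp only [cross]
  ring

lemma one_sub_compSlope_mul_sub_of_isFixed {l₁ l₂ : List ι} {p : R}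
    (hp : compSlope a (l₁ ++ l₂) * p + compIntercept a b (l₁ ++ l₂) = p) :
    (1 - compSlope a (l₁ ++ l₂)) * (p - (compSlope a l₁ * p + compIntercept a b l₁)) =
      cross a b l₁ l₂ := by
  simp only [cross, compSlope_append, compIntercept_append] at hp ⊢
  linear_combination (compSlope a l₁ - 1) * hp

end Ring

/-! ### Optimal orders -/

section OrderedRing

variable {ι R : Type*} [CommRing R] [LinearOrder R]

/-- `l` has the largest intercept among the orderings of its entries. As all of them have the same
slope, this is optimality for the composition ordering problem, for every starting value. -/
def IsOptimal (a b : ι → R) (l : List ι) : Prop :=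
  ∀ l' : List ι, l'.Perm l → compIntercept a b l' ≤ compIntercept a b l

lemma exists_perm_isOptimal (a b : ι → R) (l₀ : List ι) : ∃ l, l.Perm l₀ ∧ IsOptimal a b l := by
  obtain ⟨l, hl, hmax⟩ := Set.exists_max_image {l | l ∈ l₀.permutations} (compIntercept a b)
    l₀.permutations.finite_toSet ⟨l₀, by simp⟩
  simp only [Set.mem_ofPred_eq, List.mem_permutations] at hl hmax
  exact ⟨l, hl, fun l' hl' => hmax l' (hl'.trans hl)⟩

lemma perm_swap (F l₁ l₂ G : List ι) : (F ++ l₂ ++ l₁ ++ G).Perm (F ++ l₁ ++ l₂ ++ G) := by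
  simpa using (List.perm_append_comm_assoc l₂ l₁ G).append_left F

variable {a b : ι → R}

lemma IsOptimal.of_perm_of_le {l l' : List ι} (h : IsOptimal a b l) (hperm : l'.Perm l)
    (hle : compIntercept a b l ≤ compIntercept a b l') : IsOptimal a b l' :=
  fun k hk => (h k (hk.trans hperm)).trans hle

variable [IsStrictOrderedRing R]

lemma compSlope_nonneg (ha : ∀ i, 0 ≤ a i) (l : List ι) : 0 ≤ compSlope a l :=
  List.prod_nonneg (by simpa using fun i _ => ha i)

lemma one_le_compSlope {l : List ι} (h : ∀ i ∈ l, 1 ≤ a i) : 1 ≤ compSlope a l :=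
  List.one_le_prod (by simpa using h)

lemma IsOptimal.cross_nonneg {F l₁ l₂ G : List ι} (h : IsOptimal a b (F ++ l₁ ++ l₂ ++ G))
    (hG : 0 < compSlope a G) : 0 ≤ cross a b l₁ l₂ := by
  have hle := h _ (perm_swap F l₁ l₂ G)
  rw [compIntercept_swap a b F l₁ l₂ G, le_add_iff_nonneg_right] at hle
  exact nonneg_of_mul_nonneg_right hle hG

lemma IsOptimal.swap {F l₁ l₂ G : List ι} (ha : ∀ i, 0 ≤ a i)
    (h : IsOptimal a b (F ++ l₁ ++ l₂ ++ G)) (hcross : cross a b l₁ l₂ ≤ 0) :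
    IsOptimal a b (F ++ l₂ ++ l₁ ++ G) := by
  refine h.of_perm_of_le (perm_swap F l₁ l₂ G) ?_
  rw [compIntercept_swap a b F l₁ l₂ G]
  exact add_le_of_nonpos_right (mul_nonpos_of_nonneg_of_nonpos (compSlope_nonneg ha G) hcross)

lemma IsOptimal.apply_le_of_isFixed {l₁ l₂ : List ι} (h : IsOptimal a b (l₁ ++ l₂))
    (hlt : compSlope a (l₁ ++ l₂) < 1) {p : R}
    (hp : compSlope a (l₁ ++ l₂) * p + compIntercept a b (l₁ ++ l₂) = p) :
    compSlope a l₁ * p + compIntercept a b l₁ ≤ p := by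
  have hcross : 0 ≤ cross a b l₁ l₂ :=
    IsOptimal.cross_nonneg (F := []) (G := []) (by simpa using h) (by simp)
  rw [← one_sub_compSlope_mul_sub_of_isFixed a b hp] at hcross
  exact sub_nonneg.1 (nonneg_of_mul_nonneg_right hcross (sub_pos.2 hlt))

/-- `x`, `y`, `z` are the determinants of the pairs `(M, P)`, `(P, N)`, `(M, N)` of blocks with
slopes `m`, `q`, `n`. -/
lemma one_le_mul_mul_of_cross {m q n x y z : R} (hm : m ≤ 1) (hn₀ : 0 ≤ n) (hn : n < 1)
    (hq : 1 ≤ q) (hrel : (1 - m) * y + (1 - n) * x = (1 - q) * z) (hx : 0 < x) (hy : 0 ≤ y)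
    (hxz : 0 ≤ n * x + z) (hyz : 0 ≤ q * z + y) : 1 ≤ m * q * n := by
  have hz : z < 0 := by
    have hpos : 0 < (1 - q) * z := by
      rw [← hrel]
      exact add_pos_of_nonneg_of_pos (mul_nonneg (sub_nonneg.2 hm) hy)
        (mul_pos (sub_pos.2 hn) hx)
    exact neg_of_mul_pos_right hpos (sub_nonpos.2 hq)
  have hmul : (1 - m * q * n) * -z ≤ 0 := by
    have hxz' := mul_nonneg (sub_nonneg.2 hn.le) hxz
    have hyz' := mul_nonneg (mul_nonneg hn₀ (sub_nonneg.2 hm)) hyz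
    linear_combination hxz' + hyz' + n * hrel
  exact sub_nonpos.1 (nonpos_of_mul_nonpos_left hmul (neg_pos.2 hz))

lemma IsOptimal.cross_nonpos {F M P N G : List ι} (ha : ∀ i, 0 ≤ a i)
    (h : IsOptimal a b (F ++ M ++ P ++ N ++ G)) (hlt : compSlope a (F ++ M ++ P ++ N ++ G) < 1)
    (hF : 1 ≤ compSlope a F) (hM : compSlope a M < 1) (hP : 1 ≤ compSlope a P)
    (hN : compSlope a N < 1) (hG : 1 ≤ compSlope a G) : cross a b M P ≤ 0 := by
  have hG₀ : 0 < compSlope a G := zero_lt_one.trans_le hG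
  have hPN : 0 ≤ cross a b P N := IsOptimal.cross_nonneg (F := F ++ M) (by simpa using h) hG₀
  have hM_PN : 0 ≤ cross a b M (P ++ N) := IsOptimal.cross_nonneg (F := F) (by simpa using h) hG₀
  have hMP_N : 0 ≤ cross a b (M ++ P) N := IsOptimal.cross_nonneg (F := F) (by simpa using h) hG₀
  rw [cross_append_right] at hM_PN
  rw [cross_append_left] at hMP_N
  by_contra! hpos
  have hprod : 1 ≤ compSlope a M * compSlope a P * compSlope a N :=
    one_le_mul_mul_of_cross hM.le (compSlope_nonneg ha N) hN hP
      (one_sub_compSlope_mul_cross_add a b M P N) hpos hPN hM_PN hMP_N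
  refine hlt.not_ge ?_
  calc 1 ≤ compSlope a F * (compSlope a M * compSlope a P * compSlope a N) * compSlope a G :=
        one_le_mul_of_one_le_of_one_le (one_le_mul_of_one_le_of_one_le hF hprod) hG
    _ = compSlope a (F ++ M ++ P ++ N ++ G) := by simp only [compSlope_append]; ring

end OrderedRing

/-! ### The invariants `δ` and `γ` -/

section Gam

lemma gam_le_coe_iff {a b p : ℝ} (ha : 1 ≤ a) : gam a b ≤ p ↔ p ≤ a * p + b := by
  rcases ha.eq_or_lt with rfl | ha
  · by_cases hb : b < 0 <;> simp [gam, hb, not_le.2, not_lt.1]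
  · rw [gam, if_neg ha.ne', EReal.coe_le_coe_iff, div_le_iff_of_neg (sub_neg.2 ha)]
    constructor <;> intro h <;> linarith

lemma gam_le_coe_iff_of_lt_one {a b p : ℝ} (ha : a < 1) : gam a b ≤ p ↔ a * p + b ≤ p := by
  rw [gam, if_neg ha.ne, EReal.coe_le_coe_iff, div_le_iff₀ (sub_pos.2 ha)]
  constructor <;> intro h <;> linarith

lemma coe_le_gam {a b p : ℝ} (ha : 1 ≤ a) (hid : (a, b) ≠ (1, 0)) (hp : a * p + b ≤ p) :
    p ≤ gam a b := by
  rcases ha.eq_or_lt with rfl | ha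
  · have hb : b < 0 := lt_of_le_of_ne (by linarith) (by simpa using hid)
    simp [gam, hb]
  · rw [gam, if_neg ha.ne', EReal.coe_le_coe_iff, le_div_iff_of_neg (sub_neg.2 ha)]
    linarith

lemma one_sub_mul_le_of_gam_lt {a b a' b' : ℝ} (hδ : 1 ≤ a ↔ 1 ≤ a') (h : gam a' b' < gam a b) :
    (1 - a) * b' ≤ (1 - a') * b := by
  obtain ⟨p, hp', hp⟩ := EReal.lt_iff_exists_real_btwn.1 h
  rcases le_or_gt 1 a with ha | ha
  · have ha' : 1 ≤ a' := hδ.1 ha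
    rw [lt_iff_lt_of_le_iff_le (gam_le_coe_iff ha)] at hp
    have hp' := (gam_le_coe_iff ha').1 hp'.le
    calc (1 - a) * b' ≤ (1 - a) * ((1 - a') * p) :=
          mul_le_mul_of_nonpos_left (by linarith) (sub_nonpos.2 ha)
      _ = (1 - a') * ((1 - a) * p) := by ring
      _ ≤ (1 - a') * b := mul_le_mul_of_nonpos_left (by linarith) (sub_nonpos.2 ha')
  · have ha' : a' < 1 := not_le.1 (hδ.not.1 ha.not_ge)
    rw [lt_iff_lt_of_le_iff_le (gam_le_coe_iff_of_lt_one ha)] at hp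
    have hp' := (gam_le_coe_iff_of_lt_one ha').1 hp'.le
    calc (1 - a) * b' ≤ (1 - a) * ((1 - a') * p) :=
          mul_le_mul_of_nonneg_left (by linarith) (sub_pos.2 ha).le
      _ = (1 - a') * ((1 - a) * p) := by ring
      _ ≤ (1 - a') * b := mul_le_mul_of_nonneg_left (by linarith) (sub_pos.2 ha').le

variable {ι : Type*} {a b : ι → ℝ}

lemma IsOptimal.gam_getLast_le_gam_head {l : List ι} (h : IsOptimal a b l) (hlt : compSlope a l < 1)
    (hne : l ≠ []) (hid : (a (l.head hne), b (l.head hne)) ≠ (1, 0))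
    (hhead : 1 ≤ a (l.head hne)) (hlast : 1 ≤ a (l.getLast hne)) :
    gam (a (l.getLast hne)) (b (l.getLast hne)) ≤ gam (a (l.head hne)) (b (l.head hne)) := by
  obtain ⟨p, hp⟩ : ∃ p, compSlope a l * p + compIntercept a b l = p := by
    refine ⟨compIntercept a b l / (1 - compSlope a l), ?_⟩
    have := (sub_pos.2 hlt).ne'
    field_simp
    ring
  have hp_head : a (l.head hne) * p + b (l.head hne) ≤ p := by
    have heq : [l.head hne] ++ l.tail = l := List.cons_head_tail hne
    rw [← heq] at h hlt hp
    simpa using h.apply_le_of_isFixed hlt hp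
  have hp_last : p ≤ a (l.getLast hne) * p + b (l.getLast hne) := by
    have heq : l.dropLast ++ [l.getLast hne] = l := List.dropLast_append_getLast hne
    rw [← heq] at h hlt hp
    have hinit := h.apply_le_of_isFixed hlt hp
    simp only [compSlope_append, compIntercept_append, compSlope_cons, compSlope_nil, mul_one,
      compIntercept_singleton] at hp
    have hle := mul_le_mul_of_nonneg_left hinit (zero_le_one.trans hlast)
    linarith
  exact ((gam_le_coe_iff hlast).2 hp_last).trans (coe_le_gam hhead hid hp_head)

end Gam

/-! ### The shape of a canonical optimal order -/

section Canonical

lemma replicate_append_append_lt {α : Type*} [LinearOrder α] {k : ℕ} (hk : k ≠ 0) {p : α}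
    {M : List α} (hM : ∀ y ∈ M, p ≤ y) (hlt : ∃ y ∈ M, p < y) (G : List α) :
    List.replicate k p ++ M ++ G < M ++ List.replicate k p ++ G := by
  obtain ⟨k, rfl⟩ := Nat.exists_eq_succ_of_ne_zero hk
  induction M with
  | nil => simp at hlt
  | cons y M ih =>
    rw [List.forall_mem_cons] at hM
    rcases hM.1.lt_or_eq with hy | rfl
    · simpa [List.replicate_succ] using List.Lex.rel hy
    · have hcomm : List.replicate (k + 1) p ++ p :: M = p :: (List.replicate (k + 1) p ++ M) := by
        simp [← List.cons_append, ← List.replicate_succ, List.replicate_succ' (n := k + 1)]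
      simpa [hcomm] using ih hM.2 (by simpa using hlt)

lemma exists_append_of_forall_gap_eq_nil {α : Type*} {p : α → Prop} {l : List α}
    (h : ∀ F P G x y, l = F ++ [x] ++ P ++ [y] ++ G → ¬ p x → (∀ i ∈ P, p i) → ¬ p y → P = []) :
    ∃ S M T, l = S ++ M ++ T ∧ (∀ i ∈ S, p i) ∧ (∀ i ∈ M, ¬ p i) ∧ ∀ i ∈ T, p i := by
  induction l with
  | nil => exact ⟨[], [], [], by simp⟩
  | cons x l ih =>
    obtain ⟨S, M, T, rfl, hS, hM, hT⟩ := ih fun F P G y z hl =>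
      h (x :: F) P G y z (by simp [hl])
    by_cases hx : p x
    · exact ⟨x :: S, M, T, by simp, by simpa using ⟨hx, hS⟩, hM, hT⟩
    rcases M with _ | ⟨y, M⟩
    · exact ⟨[], [x], S ++ T, by simp, by simp, by simpa using hx, by
        simpa [or_imp, forall_and] using ⟨hS, hT⟩⟩
    · rw [List.forall_mem_cons] at hM
      obtain rfl : S = [] := h [] S (M ++ T) x y (by simp) hx hS hM.1
      exact ⟨[], x :: y :: M, T, by simp, by simp, by simpa using ⟨hx, hM⟩, hT⟩

variable {ι : Type*}

/-- The preorder on indices that compares the values of `γ`. -/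
abbrev GamLE (a b : ι → ℝ) : ι → ι → Prop := Order.Preimage (fun i => gam (a i) (b i)) (· ≤ ·)

/-- The key by which optimal orders are compared: lexicographically first by their sequences of
`δ`, negated so that `δ = +1` is preferred in front, and then by their sequences of `γ`. -/
noncomputable def key (a b : ι → ℝ) (l : List ι) : List ℤ ×ₗ List EReal :=
  toLex (l.map fun i => -del (a i), l.map fun i => gam (a i) (b i))

/-- `l` is optimal, and its key is least among the optimal orderings of its entries. -/
def IsCanonical (a b : ι → ℝ) (l : List ι) : Prop :=
  IsOptimal a b l ∧ ∀ l' : List ι, l'.Perm l → IsOptimal a b l' → key a b l ≤ key a b l'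

lemma exists_perm_isCanonical (a b : ι → ℝ) (l₀ : List ι) :
    ∃ l, l.Perm l₀ ∧ IsCanonical a b l := by
  obtain ⟨l, ⟨hl, hopt⟩, hmin⟩ := Set.exists_min_image {l | l ∈ l₀.permutations ∧ IsOptimal a b l}
    (key a b) (l₀.permutations.finite_toSet.subset fun _ h => h.1)
    (by simpa [Set.Nonempty] using exists_perm_isOptimal a b l₀)
  simp only [Set.mem_ofPred_eq, List.mem_permutations, and_imp] at hl hmin
  exact ⟨l, hl, hopt, fun l' hl' => hmin l' (hl'.trans hl)⟩

variable {a b : ι → ℝ}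

lemma IsCanonical.key_le_swap {F l₁ l₂ G : List ι} (ha : ∀ i, 0 ≤ a i)
    (h : IsCanonical a b (F ++ l₁ ++ l₂ ++ G)) (hcross : cross a b l₁ l₂ ≤ 0) :
    key a b (F ++ l₁ ++ l₂ ++ G) ≤ key a b (F ++ l₂ ++ l₁ ++ G) :=
  h.2 _ (perm_swap F l₁ l₂ G) (h.1.swap ha hcross)

lemma key_swap_lt_of_gam_lt {x y : ι} (hδ : del (a x) = del (a y))
    (hγ : gam (a y) (b y) < gam (a x) (b x)) (F G : List ι) :
    key a b (F ++ [y] ++ [x] ++ G) < key a b (F ++ [x] ++ [y] ++ G) := by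
  simp only [key, Prod.Lex.toLex_lt_toLex, List.map_append, List.map_cons, List.map_nil, hδ,
    List.append_assoc, true_and]
  exact .inr (List.append_left_lt (List.Lex.rel hγ))

lemma key_swap_lt_of_one_le {M P : List ι} {x : ι} (hx : x ∈ M) (hx₁ : a x < 1) (hP : P ≠ [])
    (hP₁ : ∀ i ∈ P, 1 ≤ a i) (F G : List ι) :
    key a b (F ++ P ++ M ++ G) < key a b (F ++ M ++ P ++ G) := by
  have hPmap : P.map (fun i => -del (a i)) = List.replicate P.length (-1) :=
    List.map_eq_replicate_iff.2 fun i hi => by simp [del, hP₁ i hi]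
  have hmin : ∀ y ∈ M.map (fun i => -del (a i)), -1 ≤ y := by
    simp only [List.forall_mem_map, del]
    intro i _
    split_ifs <;> simp
  have hlt : ∃ y ∈ M.map (fun i => -del (a i)), -1 < y :=
    ⟨-del (a x), List.mem_map_of_mem hx, by simp [del, hx₁.not_ge]⟩
  refine Prod.Lex.toLex_lt_toLex.2 (.inl ?_)
  simp only [List.map_append, hPmap]
  have := replicate_append_append_lt (by simpa using hP : P.length ≠ 0) hmin hlt
    (G.map fun i => -del (a i))
  simpa using List.append_left_lt this

lemma IsCanonical.gam_le_of_adjacent {F G : List ι} {x y : ι} (ha : ∀ i, 0 ≤ a i)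
    (h : IsCanonical a b (F ++ [x] ++ [y] ++ G)) (hδ : 1 ≤ a x ↔ 1 ≤ a y) : GamLE a b x y := by
  by_contra hlt
  replace hlt : gam (a y) (b y) < gam (a x) (b x) := not_le.1 hlt
  have hcross : cross a b [x] [y] ≤ 0 := by
    simpa [cross] using one_sub_mul_le_of_gam_lt hδ hlt
  exact (h.key_le_swap ha hcross).not_gt (key_swap_lt_of_gam_lt (by simp [del, hδ]) hlt F G)

lemma IsCanonical.pairwise_gamLE {F L G : List ι} (ha : ∀ i, 0 ≤ a i)
    (h : IsCanonical a b (F ++ L ++ G)) (hδ : ∀ x ∈ L, ∀ y ∈ L, 1 ≤ a x ↔ 1 ≤ a y) :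
    L.Pairwise (GamLE a b) := by
  rw [← List.isChain_iff_pairwise, List.isChain_iff_forall_rel_of_append_cons_cons]
  rintro x y L₁ L₂ rfl
  exact IsCanonical.gam_le_of_adjacent (F := F ++ L₁) (G := L₂ ++ G) ha (by simpa using h)
    (hδ x (by simp) y (by simp))

lemma exists_append_singleton_eq_append_of_lt_one (ha : ∀ i, 0 ≤ a i) (F : List ι) {x : ι}
    (hx : a x < 1) :
    ∃ F' M, F ++ [x] = F' ++ M ∧ 1 ≤ compSlope a F' ∧ compSlope a M < 1 ∧ x ∈ M := by
  rcases le_or_gt 1 (compSlope a F) with hF | hF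
  · exact ⟨F, [x], rfl, hF, by simpa using hx, by simp⟩
  · refine ⟨[], F ++ [x], rfl, by simp, ?_, by simp⟩
    simpa using mul_lt_one_of_nonneg_of_lt_one_left (compSlope_nonneg ha F) hF hx.le

lemma exists_singleton_append_eq_append_of_lt_one (ha : ∀ i, 0 ≤ a i) (G : List ι) {y : ι}
    (hy : a y < 1) :
    ∃ N G', [y] ++ G = N ++ G' ∧ compSlope a N < 1 ∧ 1 ≤ compSlope a G' := by
  rcases le_or_gt 1 (compSlope a G) with hG | hG
  · exact ⟨[y], G, rfl, by simpa using hy, hG⟩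
  · refine ⟨[y] ++ G, [], by simp, ?_, by simp⟩
    simpa using mul_lt_one_of_nonneg_of_lt_one_left (ha y) hy hG.le

lemma IsCanonical.eq_nil_of_gap {F P G : List ι} {x y : ι} (ha : ∀ i, 0 ≤ a i)
    (h : IsCanonical a b (F ++ [x] ++ P ++ [y] ++ G))
    (hlt : compSlope a (F ++ [x] ++ P ++ [y] ++ G) < 1)
    (hx : a x < 1) (hP : ∀ i ∈ P, 1 ≤ a i) (hy : a y < 1) : P = [] := by
  obtain ⟨F', M, hFM, hF', hM, hxM⟩ := exists_append_singleton_eq_append_of_lt_one ha F hx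
  obtain ⟨N, G', hNG, hN, hG'⟩ := exists_singleton_append_eq_append_of_lt_one ha G hy
  have heq : F ++ [x] ++ P ++ [y] ++ G = F' ++ M ++ P ++ N ++ G' := by
    rw [List.append_assoc _ [y], hNG, hFM, List.append_assoc _ N]
  rw [heq] at h hlt
  have hcross : cross a b M P ≤ 0 := h.1.cross_nonpos ha hlt hF' hM (one_le_compSlope hP) hN hG'
  rw [List.append_assoc _ N] at h
  by_contra hne
  exact (h.key_le_swap ha hcross).not_gt (key_swap_lt_of_one_le hxM hx hne hP F' (N ++ G'))

lemma IsCanonical.pairwise_gamLE_append {S M T : List ι} (ha : ∀ i, 0 ≤ a i)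
    (hid : ∀ i, (a i, b i) ≠ (1, 0)) (h : IsCanonical a b (S ++ M ++ T))
    (hlt : compSlope a (S ++ M ++ T) < 1) (hS : ∀ i ∈ S, 1 ≤ a i) (hT : ∀ i ∈ T, 1 ≤ a i) :
    (T ++ S).Pairwise (GamLE a b) := by
  have hSS : S.Pairwise (GamLE a b) :=
    IsCanonical.pairwise_gamLE (F := []) (G := M ++ T) ha (by simpa using h)
      fun x hx y hy => iff_of_true (hS x hx) (hS y hy)
  have hTT : T.Pairwise (GamLE a b) :=
    IsCanonical.pairwise_gamLE (F := S ++ M) (G := []) ha (by simpa using h)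
      fun x hx y hy => iff_of_true (hT x hx) (hT y hy)
  refine List.pairwise_append.2 ⟨hTT, hSS, fun x hx y hy => ?_⟩
  have hTne : T ≠ [] := List.ne_nil_of_mem hx
  have hSne : S ≠ [] := List.ne_nil_of_mem hy
  have hmid : GamLE a b (T.getLast hTne) (S.head hSne) := by
    have hhead : (S ++ M ++ T).head (by simp [hSne]) = S.head hSne := by simp [hSne]
    have hlast : (S ++ M ++ T).getLast (by simp [hTne]) = T.getLast hTne := by simp [hTne]
    have hle := h.1.gam_getLast_le_gam_head hlt (by simp [hSne]) (hid _)
    rw [hhead, hlast] at hle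
    exact hle (hS _ (List.head_mem hSne)) (hT _ (List.getLast_mem hTne))
  exact _root_.trans (hTT.rel_getLast hx) (_root_.trans hmid (hSS.rel_head hy))

theorem exists_isOptimal_blocks (ha : ∀ i, 0 ≤ a i) (hid : ∀ i, (a i, b i) ≠ (1, 0))
    {l₀ : List ι} (hlt : compSlope a l₀ < 1) :
    ∃ S M T : List ι, (S ++ M ++ T).Perm l₀ ∧ IsOptimal a b (S ++ M ++ T) ∧
      (∀ i ∈ S, 1 ≤ a i) ∧ (∀ i ∈ M, a i < 1) ∧ (∀ i ∈ T, 1 ≤ a i) ∧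
      (T ++ S).Pairwise (GamLE a b) ∧ M.Pairwise (GamLE a b) := by
  obtain ⟨l, hperm, hl⟩ := exists_perm_isCanonical a b l₀
  rw [← compSlope_eq_of_perm hperm] at hlt
  obtain ⟨S, M, T, rfl, hS, hM, hT⟩ := exists_append_of_forall_gap_eq_nil
    (p := fun i => 1 ≤ a i) (l := l) fun F P G x y hsplit hx hP hy => by
      subst hsplit
      exact hl.eq_nil_of_gap ha hlt (not_le.1 hx) hP (not_le.1 hy)
  exact ⟨S, M, T, hperm, hl.1, hS, fun i hi => not_le.1 (hM i hi), hT,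
    hl.pairwise_gamLE_append ha hid hlt hS hT,
    hl.pairwise_gamLE ha fun x hx y hy => iff_of_false (hM x hx) (hM y hy)⟩

end Canonical

/-! ### From lists to permutations -/

section Fin

lemma exists_perm_ofFn_eq {n : ℕ} {l : List (Fin n)} (h : l.Perm (List.finRange n)) :
    ∃ σ : Equiv.Perm (Fin n), List.ofFn σ = l := by
  have hlen : l.length = n := by simpa using h.length_eq
  have hnodup : l.Nodup := h.nodup_iff.2 (List.nodup_finRange n)
  have hmem (i : Fin n) : i ∈ l := h.mem_iff.2 (List.mem_finRange i)
  refine ⟨(finCongr hlen.symm).trans (hnodup.getEquivOfForallMemList l hmem), ?_⟩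
  apply List.ext_getElem <;> simp [hlen]

variable {α : Type*} {n : ℕ} {g : Fin n → α} {F L G : List α}

lemma exists_apply_eq_getElem (h : List.ofFn g = F ++ L ++ G) {i : Fin n}
    (hF : F.length ≤ i) (hL : i < F.length + L.length) :
    ∃ hi : i - F.length < L.length, g i = L[i - F.length] := by
  have hi : i - F.length < L.length := by omega
  refine ⟨hi, ?_⟩
  have hget : (List.ofFn g)[i]'(by simp) = g i := by simp
  simp only [h] at hget
  simp [← hget, List.getElem_append, hi, hF.not_gt]

lemma mem_of_ofFn_eq (h : List.ofFn g = F ++ L ++ G) {i : Fin n}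
    (hF : F.length ≤ i) (hL : i < F.length + L.length) : g i ∈ L := by
  obtain ⟨hi, heq⟩ := exists_apply_eq_getElem h hF hL
  exact heq ▸ List.getElem_mem hi

lemma rel_of_ofFn_eq {r : α → α → Prop} [Std.Refl r] (h : List.ofFn g = F ++ L ++ G)
    (hr : L.Pairwise r) {i j : Fin n} (hF : F.length ≤ i) (hij : i ≤ j)
    (hL : j < F.length + L.length) : r (g i) (g j) := by
  obtain ⟨hi, hgi⟩ := exists_apply_eq_getElem h hF ((Fin.le_def.1 hij).trans_lt hL)
  obtain ⟨hj, hgj⟩ := exists_apply_eq_getElem h (hF.trans (Fin.le_def.1 hij)) hL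
  rw [hgi, hgj]
  exact hr.rel_get_of_le (a := ⟨_, hi⟩) (b := ⟨_, hj⟩) (Nat.sub_le_sub_right hij _)

lemma compSeq_eq_prod_mul_add_compIntercept (a b : Fin n → ℝ) (σ : Equiv.Perm (Fin n)) (c : ℝ) :
    compSeq (fun i x => a i * x + b i) σ n c =
      (∏ i, a i) * c + compIntercept a b (List.ofFn σ) := by
  rw [compSeq, List.take_of_length_le (by simp), foldl_eq_compSlope_mul_add_compIntercept,
    ← List.ofFn_eq_map, compSlope, List.map_ofFn, List.prod_ofFn]
  congr 2
  exact Equiv.prod_comp σ a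

lemma IsOptimal.compSeq_le {a b : Fin n → ℝ} {σ : Equiv.Perm (Fin n)}
    (h : IsOptimal a b (List.ofFn σ)) (c : ℝ) (τ : Equiv.Perm (Fin n)) :
    compSeq (fun i x => a i * x + b i) τ n c ≤ compSeq (fun i x => a i * x + b i) σ n c := by
  have hperm : (List.ofFn τ).Perm (List.ofFn σ) := by
    simpa only [List.ofFn_eq_map] using τ.map_finRange_perm.trans σ.map_finRange_perm.symm
  rw [compSeq_eq_prod_mul_add_compIntercept, compSeq_eq_prod_mul_add_compIntercept]
  exact add_le_add_right (h _ hperm) _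

end Fin

end CompositionOrdering

open CompositionOrdering in
theorem stmt17_general (n : ℕ) (a b : Fin n → ℝ) (ha : ∀ i, 0 ≤ a i)
    (hnid : ∀ i, (a i, b i) ≠ (1, 0)) (hprod : ∏ i, a i < 1) :
    ∃ (σ : Equiv.Perm (Fin n)) (s t : ℕ), s ≤ t ∧ t ≤ n ∧
      (∀ (c : ℝ) (τ : Equiv.Perm (Fin n)),
        compSeq (fun i x => a i * x + b i) τ n c ≤
          compSeq (fun i x => a i * x + b i) σ n c) ∧
      (∀ i : Fin n, i.val < s → del (a (σ i)) = 1) ∧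
      (∀ i : Fin n, t ≤ i.val → del (a (σ i)) = 1) ∧
      (∀ i : Fin n, s ≤ i.val → i.val < t → del (a (σ i)) = -1) ∧
      (∀ i j : Fin n, t ≤ i.val → i ≤ j →
        gam (a (σ i)) (b (σ i)) ≤ gam (a (σ j)) (b (σ j))) ∧
      (∀ i j : Fin n, i ≤ j → j.val < s →
        gam (a (σ i)) (b (σ i)) ≤ gam (a (σ j)) (b (σ j))) ∧
      (∀ i j : Fin n, t ≤ i.val → j.val < s →
        gam (a (σ i)) (b (σ i)) ≤ gam (a (σ j)) (b (σ j))) ∧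
      (∀ i j : Fin n, s ≤ i.val → i ≤ j → j.val < t →
        gam (a (σ i)) (b (σ i)) ≤ gam (a (σ j)) (b (σ j))) := by
  have hslope : compSlope a (List.finRange n) < 1 := by
    rwa [compSlope, ← List.ofFn_eq_map, List.prod_ofFn]
  obtain ⟨S, M, T, hperm, hopt, hS, hM, hT, hTS, hMM⟩ := exists_isOptimal_blocks ha hnid hslope
  obtain ⟨σ, hσ⟩ := exists_perm_ofFn_eq hperm
  have hlen : S.length + M.length + T.length = n := by
    simpa [add_assoc] using hperm.length_eq
  obtain ⟨hTT, hSS, hTS⟩ := List.pairwise_append.1 hTS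
  have hσS : List.ofFn σ = [] ++ S ++ (M ++ T) := by simpa using hσ
  have hσT : List.ofFn σ = (S ++ M) ++ T ++ [] := by simpa using hσ
  have memS (i : Fin n) (hi : i.val < S.length) : σ i ∈ S :=
    mem_of_ofFn_eq hσS (by simp) (by simpa using hi)
  have memT (i : Fin n) (hi : S.length + M.length ≤ i.val) : σ i ∈ T :=
    mem_of_ofFn_eq hσT (by simpa using hi) (by simp [hlen])
  rw [← hσ] at hopt
  exact ⟨σ, S.length, S.length + M.length, by omega, by omega, hopt.compSeq_le,
    fun i hi => by simp [del, hS _ (memS i hi)], fun i hi => by simp [del, hT _ (memT i hi)],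
    fun i hi hi' => by simp [del, hM _ (mem_of_ofFn_eq hσ hi hi')],
    fun i j hi hij => rel_of_ofFn_eq hσT hTT (by simpa using hi) hij (by simp [hlen]),
    fun i j hij hj => rel_of_ofFn_eq hσS hSS (by simp) hij (by simpa using hj),
    fun i j hi hj => hTS _ (memT i hi) _ (memS j hj),
    fun i j hi hij hj => rel_of_ofFn_eq hσ hMM hi hij hj⟩

/-- If `∏ aᵢ < 1`, there is an optimal permutation `σ` (0-indexed positions) and
`0 ≤ s ≤ t ≤ n` with `δ = +1` on positions `[0, s) ∪ [t, n)`, `δ = -1` on `[s, t)`,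
`γ` nondecreasing along positions `t, …, n-1, 0, …, s-1`, and `γ` nondecreasing
along positions `s, …, t-1`. -/
theorem stmt17 (n : ℕ) (c : ℝ) (a b : Fin n → ℝ) (ha : ∀ i, 0 ≤ a i)
    (hnid : ∀ i, (a i, b i) ≠ (1, 0)) (hprod : ∏ i, a i < 1) :
    ∃ (σ : Equiv.Perm (Fin n)) (s t : ℕ), s ≤ t ∧ t ≤ n ∧
      (∀ τ : Equiv.Perm (Fin n),
        compSeq (fun i x => a i * x + b i) τ n c ≤
          compSeq (fun i x => a i * x + b i) σ n c) ∧
      (∀ i : Fin n, i.val < s → del (a (σ i)) = 1) ∧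
      (∀ i : Fin n, t ≤ i.val → del (a (σ i)) = 1) ∧
      (∀ i : Fin n, s ≤ i.val → i.val < t → del (a (σ i)) = -1) ∧
      (∀ i j : Fin n, t ≤ i.val → i ≤ j →
        gam (a (σ i)) (b (σ i)) ≤ gam (a (σ j)) (b (σ j))) ∧
      (∀ i j : Fin n, i ≤ j → j.val < s →
        gam (a (σ i)) (b (σ i)) ≤ gam (a (σ j)) (b (σ j))) ∧
      (∀ i j : Fin n, t ≤ i.val → j.val < s →
        gam (a (σ i)) (b (σ i)) ≤ gam (a (σ j)) (b (σ j))) ∧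
      (∀ i j : Fin n, s ≤ i.val → i ≤ j → j.val < t →
        gam (a (σ i)) (b (σ i)) ≤ gam (a (σ j)) (b (σ j))) := by
  obtain ⟨σ, s, t, hst, htn, hopt, hshape⟩ := stmt17_general n a b ha hnid hprod
  exact ⟨σ, s, t, hst, htn, hopt c, hshape⟩
end

section
/- Let c ∈ ℝ and let f_i(x) = a_i x + b_i (i ∈ [n]) be monotone nondecreasing linear functions, none of which is the identity (a_i ≥ 0 and (a_i, b_i) ≠ (1, 0)). Let σ be a permutation of [n] compatible with the lexicographic order with respect to (δ(f_i), γ(f_i)). Then there exists an integer t with 1 ≤ t ≤ n such that the cyclic rotation (σ(t), σ(t+1), …, σ(n), σ(1), σ(2), …, σ(t−1)) is optimal for the maximum total composition ordering problem ((f_i)_{i∈[n]}, c). -/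
/-! Encode `x ↦ a x + b` by its displacement `z = b + (a - 1) i`. Following `z` by `w` gives
`(1 + w.im) z + w`, so the displacement of a composition lies in every convex cone containing the
displacements of its factors, and applying `z` before `w` rather than after it raises the value by
the signed area `ω z w`. Since the lexicographic order on `(δ, γ)` is the order of the arguments of
the displacements, it suffices to show that some rotation of a list sweeping counterclockwise
through at most one turn is optimal.

This goes by induction. Let `f` be the first function of an optimal order. The others sweep
counterclockwise as `A ++ B` from `f` on, and by induction they may be taken in the order `B ++ A`.
Suppose that both rotations `B ++ f :: A` and `f :: (A ++ B)` of the sweep are worse than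
`f :: (B ++ A)`, and let `h` be the head of `B`. If `h` is at least half a turn past `f`, the
displacement of `B` lies on the wrong side of `f` for `B ++ f :: A` to be worse. Otherwise the
displacement of `A` lies in the cone spanned by `f` and `h`, and moving `h` to the very end is an
improvement.
-/

open Complex hiding cos sin sin_sub
open Real

attribute [local instance] finrank_real_complex_fact

local notation "ω" => Complex.orientation.areaForm

section Compose

/-- The displacement of `x ↦ a x + b`, encoded as `z = b + (a - 1) i`: the function is
`x ↦ x + (z.re + z.im * x)`, it has slope `1 + z.im`, and it is the identity iff `z = 0`. -/
noncomputable def displacement (a b : ℝ) : ℂ := ⟨b, a - 1⟩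

/-- The displacement of the composition of the linear functions with the displacements in a list,
the head of the list being applied first. -/
noncomputable def compose : List ℂ → ℂ
  | [] => 0
  | z :: l => (1 + (compose l).im) • z + compose l

lemma displacement_ne_zero {a b : ℝ} (h : (a, b) ≠ (1, 0)) : displacement a b ≠ 0 := by
  contrapose! h
  simpa [displacement, Complex.ext_iff, sub_eq_zero, and_comm] using h

lemma compose_singleton (z : ℂ) : compose [z] = z := by
  simp [compose]

lemma one_add_im_compose (l : List ℂ) :
    1 + (compose l).im = (l.map fun z ↦ 1 + z.im).prod := by
  induction l with
  | nil => simp [compose]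
  | cons z l ih =>
    rw [List.map_cons, List.prod_cons, ← ih]
    simp only [compose, add_im, real_smul, im_ofReal_mul]
    ring

lemma one_add_im_compose_nonneg {l : List ℂ} (hl : ∀ z ∈ l, 0 ≤ 1 + z.im) :
    0 ≤ 1 + (compose l).im := by
  rw [one_add_im_compose]
  exact List.prod_nonneg (by simpa using hl)

lemma im_compose_eq_of_perm {l m : List ℂ} (h : l.Perm m) :
    (compose l).im = (compose m).im := by
  have := (h.map fun z ↦ 1 + z.im).prod_eq
  rwa [← one_add_im_compose, ← one_add_im_compose, add_right_inj] at this

lemma compose_append (l m : List ℂ) :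
    compose (l ++ m) = (1 + (compose m).im) • compose l + compose m := by
  induction l with
  | nil => simp [compose]
  | cons z l ih =>
    have him : 1 + (compose (l ++ m)).im = (1 + (compose m).im) * (1 + (compose l).im) := by
      simp only [one_add_im_compose, List.map_append, List.prod_append, mul_comm]
    rw [List.cons_append, compose, compose, him, ih]
    module

lemma compose_mem {C : PointedCone ℝ ℂ} {l : List ℂ} (hl : ∀ z ∈ l, 0 ≤ 1 + z.im)
    (hC : ∀ z ∈ l, z ∈ C) : compose l ∈ C := by
  induction l with
  | nil => exact C.zero_mem
  | cons z l ih =>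
    simp only [List.forall_mem_cons] at hl hC
    exact C.add_mem (C.smul_mem (one_add_im_compose_nonneg hl.2) hC.1) (ih hl.2 hC.2)

lemma foldl_displacement (l : List ℂ) (c : ℝ) :
    l.foldl (fun x z ↦ x + (z.re + z.im * x)) c =
      c + ((compose l).re + (compose l).im * c) := by
  induction l generalizing c with
  | nil => simp [compose]
  | cons z l ih =>
    rw [List.foldl_cons, ih]
    simp only [compose, add_re, add_im, real_smul, re_ofReal_mul, im_ofReal_mul]
    ring

end Compose

section AreaForm

lemma areaForm_eq (z w : ℂ) : ω z w = z.re * w.im - z.im * w.re := by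
  simp [Complex.areaForm, sub_eq_add_neg]

lemma re_compose_append_comm (l m : List ℂ) :
    (compose (l ++ m)).re = (compose (m ++ l)).re + ω (compose l) (compose m) := by
  simp only [compose_append, areaForm_eq, add_re, real_smul, re_ofReal_mul]
  ring

lemma re_compose_append_append_comm (l m k : List ℂ) :
    (compose (l ++ m ++ k)).re =
      (compose (m ++ l ++ k)).re + (1 + (compose k).im) * ω (compose l) (compose m) := by
  simp only [compose_append _ k, add_re, real_smul, re_ofReal_mul, re_compose_append_comm l m]
  ring

lemma areaForm_compose_nonneg {l : List ℂ} {w : ℂ} (hl : ∀ z ∈ l, 0 ≤ 1 + z.im)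
    (hw : ∀ z ∈ l, 0 ≤ ω z w) : 0 ≤ ω (compose l) w :=
  compose_mem (C := (PointedCone.positive ℝ ℝ).comap (LinearMap.flip ω w)) hl hw

lemma areaForm_compose_nonpos_of_mem_hull {f h : ℂ} {s t : List ℂ}
    (hs : compose s ∈ PointedCone.hull ℝ {f, h}) (hs_pos : 0 < 1 + (compose s).im)
    (hfh : 0 ≤ ω f h) (hft : 0 ≤ ω f (compose (h :: t))) (hts : 0 ≤ ω h (compose (t ++ s))) :
    ω (compose (h :: t)) (compose s) ≤ 0 := by
  obtain ⟨⟨p, hp⟩, ⟨q, hq⟩, hpq⟩ := Submodule.mem_span_pair.1 hs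
  change p • f + q • h = compose s at hpq
  have hs_left : ω (compose (h :: t)) (compose s) =
      q * ω (compose (h :: t)) h - p * ω f (compose (h :: t)) := by
    rw [← hpq, map_add, map_smul, map_smul, Complex.orientation.areaForm_swap _ f, smul_eq_mul,
      smul_eq_mul]
    ring
  have hs_right : ω h (compose s) = -(p * ω f h) := by
    rw [← hpq, map_add, map_smul, map_smul, Complex.orientation.areaForm_apply_self,
      Complex.orientation.areaForm_swap h f, smul_zero, add_zero, smul_neg, smul_eq_mul]
  have ht : ω h (compose (h :: t)) = ω h (compose t) := by
    rw [compose, map_add, map_smul, Complex.orientation.areaForm_apply_self, smul_zero, zero_add]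
  have hts_eq : ω h (compose (t ++ s)) =
      -((1 + (compose s).im) * ω (compose (h :: t)) h) - p * ω f h := by
    rw [compose_append, map_add, map_smul, ← ht, hs_right,
      Complex.orientation.areaForm_swap h (compose (h :: t)), smul_eq_mul]
    ring
  have hth : ω (compose (h :: t)) h ≤ 0 := by
    refine nonpos_of_mul_nonpos_right ?_ hs_pos
    linarith [mul_nonneg hp hfh]
  linarith [mul_nonneg hp hft, mul_nonpos_of_nonneg_of_nonpos hq hth]

end AreaForm

section Sweep

/-- `IsSweep α β l`: the members of `l` have arguments, determined modulo `2π`, that increase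
weakly along `l` and stay in `[α, β]`. -/
inductive IsSweep : ℝ → ℝ → List ℂ → Prop
  | nil {α β : ℝ} (h : α ≤ β) : IsSweep α β []
  | cons {α β θ : ℝ} {z : ℂ} {l : List ℂ} (hθ : α ≤ θ) (hz : (θ : Angle) = z.arg)
      (hl : IsSweep θ β l) : IsSweep α β (z :: l)

namespace IsSweep

variable {α β γ : ℝ} {l m : List ℂ}

lemma le (h : IsSweep α β l) : α ≤ β := by
  induction h with
  | nil h => exact h
  | cons hθ _ _ ih => exact hθ.trans ih

lemma mono_left (hαβ : α ≤ β) (h : IsSweep β γ l) : IsSweep α γ l := by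
  cases h with
  | nil h => exact .nil (hαβ.trans h)
  | cons hθ hz hl => exact .cons (hαβ.trans hθ) hz hl

lemma exists_of_mem (h : IsSweep α β l) {z : ℂ} (hz : z ∈ l) :
    ∃ θ ∈ Set.Icc α β, (θ : Angle) = z.arg := by
  induction h with
  | nil => simp at hz
  | cons hθ hw hl ih =>
    rcases List.mem_cons.1 hz with rfl | hz
    · exact ⟨_, ⟨hθ, hl.le⟩, hw⟩
    · obtain ⟨η, hη, h⟩ := ih hz
      exact ⟨η, ⟨hθ.trans hη.1, hη.2⟩, h⟩

lemma append (hl : IsSweep α β l) (hm : IsSweep β γ m) : IsSweep α γ (l ++ m) := by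
  induction hl with
  | nil h => exact hm.mono_left h
  | cons hθ hz _ ih => exact .cons hθ hz (ih hm)

lemma exists_of_append (h : IsSweep α γ (l ++ m)) : ∃ β, IsSweep α β l ∧ IsSweep β γ m := by
  induction l generalizing α with
  | nil => exact ⟨α, .nil le_rfl, h⟩
  | cons z l ih =>
    cases h with
    | cons hθ hz h =>
      obtain ⟨β, hl, hm⟩ := ih h
      exact ⟨β, .cons hθ hz hl, hm⟩

lemma add_two_pi (h : IsSweep α β l) : IsSweep (α + 2 * π) (β + 2 * π) l := by
  induction h with
  | nil h => exact .nil (by gcongr)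
  | cons hθ hz _ ih => exact .cons (by gcongr) (by simpa using hz) ih

lemma exists_append_comm (h : IsSweep α (α + 2 * π) (l ++ m)) :
    ∃ β, IsSweep β (β + 2 * π) (m ++ l) := by
  obtain ⟨β, hl, hm⟩ := h.exists_of_append
  exact ⟨β, hm.append hl.add_two_pi⟩

lemma of_pairwise_arg_le (hαβ : α ≤ β) (hmem : ∀ z ∈ l, z.arg ∈ Set.Icc α β)
    (hl : l.Pairwise fun z w ↦ z.arg ≤ w.arg) : IsSweep α β l := by
  induction l generalizing α with
  | nil => exact .nil hαβ
  | cons z l ih =>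
    rw [List.pairwise_cons] at hl
    rw [List.forall_mem_cons] at hmem
    exact .cons hmem.1.1 rfl (ih hmem.1.2 (fun w hw ↦ ⟨hl.1 w hw, (hmem.2 w hw).2⟩) hl.2)

end IsSweep

variable {u v w : ℂ} {x y z : ℝ}

lemma eq_norm_smul_of_coe_eq_arg (hu : (x : Angle) = u.arg) :
    u = ‖u‖ • (⟨cos x, sin x⟩ : ℂ) := by
  have hcos : cos x = cos u.arg := congrArg Angle.cos hu
  have hsin : sin x = sin u.arg := congrArg Angle.sin hu
  apply Complex.ext <;> simp [hcos, hsin]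

lemma areaForm_eq_norm_mul_sin_sub (hu : (x : Angle) = u.arg) (hv : (y : Angle) = v.arg) :
    ω u v = ‖u‖ * ‖v‖ * sin (y - x) := by
  conv_lhs => rw [eq_norm_smul_of_coe_eq_arg hu, eq_norm_smul_of_coe_eq_arg hv]
  simp only [areaForm_eq, real_smul, re_ofReal_mul, im_ofReal_mul, sin_sub]
  ring

lemma areaForm_nonneg_of_le (hu : (x : Angle) = u.arg) (hv : (y : Angle) = v.arg)
    (hxy : x ≤ y) (hyx : y ≤ x + π) : 0 ≤ ω u v := by
  rw [areaForm_eq_norm_mul_sin_sub hu hv]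
  have := sin_nonneg_of_nonneg_of_le_pi (sub_nonneg.2 hxy) (by linarith)
  positivity

lemma areaForm_pos_of_lt (hu₀ : u ≠ 0) (hv₀ : v ≠ 0) (hu : (x : Angle) = u.arg)
    (hv : (y : Angle) = v.arg) (hxy : x < y) (hyx : y < x + π) : 0 < ω u v := by
  rw [areaForm_eq_norm_mul_sin_sub hu hv]
  have := sin_pos_of_pos_of_lt_pi (sub_pos.2 hxy) (by linarith)
  positivity

lemma mem_hull_pair_of_le (hu₀ : u ≠ 0) (hv₀ : v ≠ 0) (hu : (x : Angle) = u.arg)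
    (hv : (y : Angle) = v.arg) (hw : (z : Angle) = w.arg) (hxz : x ≤ z) (hzy : z ≤ y)
    (hyx : y < x + π) : w ∈ PointedCone.hull ℝ {u, v} := by
  rcases (hxz.trans hzy).eq_or_lt with hxy | hxy
  · obtain rfl : z = x := by linarith
    have hwu : (‖w‖ / ‖u‖) • u = w := calc
      (‖w‖ / ‖u‖) • u = (‖w‖ / ‖u‖) • ‖u‖ • (⟨cos z, sin z⟩ : ℂ) :=
        congrArg _ (eq_norm_smul_of_coe_eq_arg hu)
      _ = ‖w‖ • (⟨cos z, sin z⟩ : ℂ) := by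
        rw [smul_smul, div_mul_cancel₀ _ (norm_ne_zero_iff.2 hu₀)]
      _ = w := (eq_norm_smul_of_coe_eq_arg hw).symm
    exact Submodule.mem_span_pair.2
      ⟨⟨_, div_nonneg (norm_nonneg w) (norm_nonneg u)⟩, 0, by simpa using hwu⟩
  · have hD := areaForm_pos_of_lt hu₀ hv₀ hu hv hxy hyx
    have hp := areaForm_nonneg_of_le hw hv hzy (by linarith)
    have hq := areaForm_nonneg_of_le hu hw hxz (by linarith)
    -- Cramer's rule
    have hcramer : (ω w v / ω u v) • u + (ω u w / ω u v) • v = w := by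
      apply Complex.ext <;>
        simp only [add_re, add_im, real_smul, re_ofReal_mul, im_ofReal_mul] <;> field_simp <;>
        simp only [areaForm_eq] <;> ring
    exact Submodule.mem_span_pair.2 ⟨⟨_, div_nonneg hp hD.le⟩, ⟨_, div_nonneg hq hD.le⟩, hcramer⟩

lemma IsSweep.areaForm_compose_nonpos {α : ℝ} {f h : ℂ} {s t : List ℂ}
    (hsweep : IsSweep α (α + 2 * π) (f :: (s ++ h :: t))) (hf₀ : f ≠ 0) (hh₀ : h ≠ 0)
    (hslope_s : ∀ z ∈ s, 0 ≤ 1 + z.im) (hslope_t : ∀ z ∈ h :: t, 0 ≤ 1 + z.im)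
    (hs_pos : 0 < 1 + (compose s).im) (hft : 0 < ω f (compose (h :: t)))
    (hts : 0 ≤ ω h (compose (t ++ s))) : ω (compose (h :: t)) (compose s) ≤ 0 := by
  obtain _ | ⟨hφ, hf, hst⟩ := hsweep
  rename_i φ
  obtain ⟨β, hs, ht⟩ := hst.exists_of_append
  obtain ⟨η, hβη, hh, ht'⟩ : ∃ η, β ≤ η ∧ (η : Angle) = h.arg ∧ IsSweep η (α + 2 * π) (h :: t) := by
    cases ht with
    | cons hβη hh ht' => exact ⟨_, hβη, hh, .cons le_rfl hh ht'⟩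
  rcases lt_or_ge η (φ + π) with hlt | hge
  · have hcone : compose s ∈ PointedCone.hull ℝ {f, h} := by
      refine compose_mem hslope_s fun z hz ↦ ?_
      obtain ⟨θ, hθ, hz⟩ := hs.exists_of_mem hz
      exact mem_hull_pair_of_le hf₀ hh₀ hf hh hz hθ.1 (hθ.2.trans hβη) hlt
    exact areaForm_compose_nonpos_of_mem_hull hcone hs_pos
      (areaForm_nonneg_of_le hf hh (hs.le.trans hβη) hlt.le) hft.le hts
  · have htf : 0 ≤ ω (compose (h :: t)) f := by
      refine areaForm_compose_nonneg hslope_t fun z hz ↦ ?_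
      obtain ⟨θ, hθ, hz⟩ := ht'.exists_of_mem hz
      exact areaForm_nonneg_of_le (y := φ + 2 * π) hz (by simpa using hf)
        (by linarith [hθ.2]) (by linarith [hθ.1])
    rw [Complex.orientation.areaForm_swap] at htf
    linarith

end Sweep

section Optimal

/-- Composing the list in the given order gives the largest constant term among all orders. As the
slope of a composition does not depend on the order, this is optimality at every initial value. -/
def IsOptimal (l : List ℂ) : Prop :=
  ∀ ρ : List ℂ, ρ.Perm l → (compose ρ).re ≤ (compose l).re

lemma exists_perm_isOptimal (l : List ℂ) : ∃ m, m.Perm l ∧ IsOptimal m := by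
  classical
  obtain ⟨m, hm, hmax⟩ := l.permutations.toFinset.exists_max_image (fun k ↦ (compose k).re)
    ⟨l, by simp⟩
  simp only [List.mem_toFinset, List.mem_permutations] at hm hmax
  exact ⟨m, hm, fun ρ hρ ↦ hmax ρ (hρ.trans hm)⟩

namespace IsOptimal

variable {f : ℂ} {l m A B : List ℂ}

lemma of_le (hl : IsOptimal l) (hml : m.Perm l) (hle : (compose l).re ≤ (compose m).re) :
    IsOptimal m :=
  fun ρ hρ ↦ (hl ρ (hρ.trans hml)).trans hle

lemma cons_of_perm (h : IsOptimal (f :: l)) (hm : IsOptimal m) (hml : m.Perm l) :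
    IsOptimal (f :: m) := by
  apply h.of_le (hml.cons f)
  simpa [compose, im_compose_eq_of_perm hml] using hm l hml.symm

lemma tail (h : IsOptimal (f :: l)) : IsOptimal l := by
  intro ρ hρ
  simpa [compose, im_compose_eq_of_perm hρ] using h (f :: ρ) (hρ.cons f)

lemma areaForm_nonneg (h : IsOptimal (l ++ m)) : 0 ≤ ω (compose l) (compose m) := by
  have := h (m ++ l) List.perm_append_comm
  rwa [re_compose_append_comm l m, le_add_iff_nonneg_right] at this

theorem append_cons_or_cons_append {α : ℝ} (hne : ∀ z ∈ f :: (A ++ B), z ≠ 0)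
    (hslope : ∀ z ∈ f :: (A ++ B), 0 ≤ 1 + z.im) (hsweep : IsSweep α (α + 2 * π) (f :: (A ++ B)))
    (hopt : IsOptimal (f :: (B ++ A))) :
    IsOptimal (B ++ f :: A) ∨ IsOptimal (f :: (A ++ B)) := by
  by_contra! ⟨hBfA, hfAB⟩
  simp only [List.forall_mem_cons, List.forall_mem_append] at hne hslope
  obtain ⟨-, hslopeA, hslopeB⟩ := hslope
  have hslope_mul : 0 < (1 + (compose A).im) * ω f (compose B) := by
    have := not_le.1 (mt (hopt.of_le List.perm_middle) hBfA)
    have hswap := re_compose_append_append_comm [f] B A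
    rw [compose_singleton] at hswap
    simp only [List.append_assoc, List.cons_append, List.nil_append] at hswap
    linarith
  have hBA : 0 < ω (compose B) (compose A) := by
    have := not_le.1 (mt (hopt.of_le (List.perm_append_comm.cons f)) hfAB)
    simp only [compose, add_re, real_smul, re_ofReal_mul, re_compose_append_comm B A,
      im_compose_eq_of_perm (List.perm_append_comm (l₁ := A) (l₂ := B))] at this
    linarith
  have hfB : 0 < ω f (compose B) :=
    pos_of_mul_pos_right hslope_mul (one_add_im_compose_nonneg hslopeA)
  have hA_pos : 0 < 1 + (compose A).im := pos_of_mul_pos_left hslope_mul hfB.le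
  cases B with
  | nil => simp [compose] at hBA
  | cons h t =>
    have hh := hopt.tail.areaForm_nonneg (l := [h]) (m := t ++ A)
    rw [compose_singleton] at hh
    exact hBA.not_ge
      (hsweep.areaForm_compose_nonpos hne.1 (hne.2.2 h List.mem_cons_self) hslopeA hslopeB hA_pos
        hfB hh)

end IsOptimal

lemma exists_append_of_isRotated {X : Type*} {l r : List X} (h : r ~r l) :
    ∃ A B, l = A ++ B ∧ r = B ++ A := by
  obtain ⟨k, rfl⟩ := h.symm
  exact ⟨_, _, (List.take_append_drop _ l).symm, List.rotate_eq_drop_append_take_mod⟩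

theorem IsSweep.exists_isRotated_isOptimal {l : List ℂ} {α : ℝ} (hl : IsSweep α (α + 2 * π) l)
    (hne : ∀ z ∈ l, z ≠ 0) (hslope : ∀ z ∈ l, 0 ≤ 1 + z.im) :
    ∃ r, r ~r l ∧ IsOptimal r := by
  obtain ⟨N, hN⟩ : ∃ N, l.length = N := ⟨_, rfl⟩
  induction N generalizing l α with
  | zero =>
    obtain rfl := List.length_eq_zero_iff.1 hN
    exact ⟨[], .refl _, fun ρ hρ ↦ by rw [hρ.eq_nil]⟩
  | succ N ih =>
    obtain ⟨_ | ⟨f, ρ⟩, hρ, hopt⟩ := exists_perm_isOptimal l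
    · simp [← hρ.length_eq] at hN
    obtain ⟨m₁, m₂, rfl⟩ := List.append_of_mem (hρ.subset List.mem_cons_self)
    obtain ⟨β, hβ⟩ := hl.exists_append_comm
    have hrot : f :: (m₂ ++ m₁) ~r m₁ ++ f :: m₂ := List.isRotated_append (l := f :: m₂)
    have hperm : ρ.Perm (m₂ ++ m₁) := (List.perm_cons f).1 (hρ.trans hrot.perm.symm)
    have hlength : (m₂ ++ m₁).length = N := by
      simp only [List.length_append, List.length_cons] at hN ⊢
      omega
    simp only [← hrot.perm.mem_iff] at hne hslope
    change IsSweep β (β + 2 * π) (f :: (m₂ ++ m₁)) at hβ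
    generalize m₂ ++ m₁ = R at hβ hrot hperm hlength hne hslope
    have htail : IsSweep β (β + 2 * π) R := by
      cases hβ with
      | cons hθ _ h => exact h.mono_left hθ
    obtain ⟨r, hr, hr_opt⟩ := ih htail (List.forall_mem_of_forall_mem_cons hne)
      (List.forall_mem_of_forall_mem_cons hslope) hlength
    obtain ⟨A, B, rfl, rfl⟩ := exists_append_of_isRotated hr
    have hopt' : IsOptimal (f :: (B ++ A)) :=
      hopt.cons_of_perm hr_opt (hr.perm.trans hperm.symm)
    rcases hopt'.append_cons_or_cons_append hne hslope hβ with h | h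
    · exact ⟨_, List.isRotated_append.trans hrot, h⟩
    · exact ⟨_, hrot, h⟩

end Optimal

section Lex

variable {a b a' b' : ℝ}

lemma displacement_one (b : ℝ) : displacement 1 b = b := by
  simp [displacement, Complex.ext_iff]

lemma gam_eq_bot_iff : gam a b = ⊥ ↔ a = 1 ∧ 0 ≤ b := by
  unfold gam
  split_ifs <;> simp_all

lemma gam_eq_top_iff : gam a b = ⊤ ↔ a = 1 ∧ b < 0 := by
  unfold gam
  split_ifs <;> simp_all

lemma gam_le_gam_iff (h : 0 < (1 - a) * (1 - a')) :
    gam a b ≤ gam a' b' ↔ 0 ≤ ω (displacement a b) (displacement a' b') := by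
  obtain ⟨ha, ha'⟩ := mul_ne_zero_iff.1 h.ne'
  rw [gam, gam, if_neg (sub_ne_zero.1 ha).symm, if_neg (sub_ne_zero.1 ha').symm,
    EReal.coe_le_coe_iff, ← sub_nonneg, div_sub_div _ _ ha' ha, mul_comm (1 - a') (1 - a),
    le_div_iff₀ h, zero_mul, areaForm_eq, displacement, displacement]
  ring_nf

lemma arg_le_arg_of_areaForm_nonneg {z w : ℂ} (hz : z ≠ 0) (hw : w ≠ 0)
    (hlt : z.arg < w.arg + π) (hzw : 0 ≤ ω z w) : z.arg ≤ w.arg := by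
  by_contra! h
  have := areaForm_pos_of_lt hw hz rfl rfl h hlt
  rw [Complex.orientation.areaForm_swap] at this
  linarith

lemma arg_displacement_neg_iff : (displacement a b).arg < 0 ↔ a < 1 := by
  simp [displacement, arg_neg_iff]

lemma arg_displacement_le_of_gam_le_of_lt_one (hz : (a, b) ≠ (1, 0)) (hw : (a', b') ≠ (1, 0))
    (ha : a < 1) (ha' : a' < 1) (h : gam a b ≤ gam a' b') :
    (displacement a b).arg ≤ (displacement a' b').arg := by
  refine arg_le_arg_of_areaForm_nonneg (displacement_ne_zero hz) (displacement_ne_zero hw) ?_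
    ((gam_le_gam_iff (mul_pos (sub_pos.2 ha) (sub_pos.2 ha'))).1 h)
  linarith [arg_displacement_neg_iff (b := b).2 ha, neg_pi_lt_arg (displacement a' b')]

lemma arg_displacement_le_of_gam_le_of_one_le (hz : (a, b) ≠ (1, 0)) (hw : (a', b') ≠ (1, 0))
    (ha : 1 ≤ a) (ha' : 1 ≤ a') (h : gam a b ≤ gam a' b') :
    (displacement a b).arg ≤ (displacement a' b').arg := by
  have hnonneg : 0 ≤ (displacement a' b').arg := not_lt.1 (mt arg_displacement_neg_iff.1 ha'.not_gt)
  by_cases hbot : a = 1 ∧ 0 ≤ b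
  · rwa [hbot.1, displacement_one, arg_ofReal_of_nonneg hbot.2]
  by_cases htop : a' = 1 ∧ b' < 0
  · rw [htop.1, displacement_one, arg_ofReal_of_neg htop.2]
    exact arg_le_pi _
  have ha_lt : 1 < a := by
    refine ha.lt_of_ne' fun ha₁ ↦ ?_
    have : gam a b = ⊤ := gam_eq_top_iff.2 ⟨ha₁, not_le.1 (hbot ⟨ha₁, ·⟩)⟩
    exact htop (gam_eq_top_iff.1 (top_le_iff.1 (this ▸ h)))
  have ha_lt' : 1 < a' := by
    refine ha'.lt_of_ne' fun ha₁ ↦ ?_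
    have : gam a' b' = ⊥ := gam_eq_bot_iff.2 ⟨ha₁, not_lt.1 (htop ⟨ha₁, ·⟩)⟩
    exact hbot (gam_eq_bot_iff.1 (le_bot_iff.1 (this ▸ h)))
  refine arg_le_arg_of_areaForm_nonneg (displacement_ne_zero hz) (displacement_ne_zero hw) ?_
    ((gam_le_gam_iff (mul_pos_of_neg_of_neg (sub_neg.2 ha_lt) (sub_neg.2 ha_lt'))).1 h)
  have hpos : 0 < (displacement a' b').arg := by
    refine hnonneg.lt_of_ne' fun h₀ ↦ ?_
    have him : a' - 1 = 0 := (arg_eq_zero_iff.1 h₀).2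
    linarith
  linarith [arg_le_pi (displacement a b)]

lemma arg_displacement_le_of_lex (hz : (a, b) ≠ (1, 0)) (hw : (a', b') ≠ (1, 0))
    (h : del a < del a' ∨ (del a = del a' ∧ gam a b ≤ gam a' b')) :
    (displacement a b).arg ≤ (displacement a' b').arg := by
  rcases lt_or_ge a 1 with ha | ha <;> rcases lt_or_ge a' 1 with ha' | ha'
  · simp only [del, ha.not_ge, ↓reduceIte, Int.reduceNeg, ha'.not_ge, lt_self_iff_false, true_and,
      false_or] at h
    exact arg_displacement_le_of_gam_le_of_lt_one hz hw ha ha' h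
  · exact (arg_displacement_neg_iff.2 ha).le.trans
      (not_lt.1 (mt arg_displacement_neg_iff.1 ha'.not_gt))
  · simp [del, ha, ha'.not_ge] at h
  · simp only [del, ha, ↓reduceIte, ha', lt_self_iff_false, true_and, false_or] at h
    exact arg_displacement_le_of_gam_le_of_one_le hz hw ha ha' h

end Lex

section Fin

variable {n : ℕ}

lemma compSeq_eq (a b : Fin n → ℝ) (ρ : Fin n → Fin n) (c : ℝ) :
    compSeq (fun i x ↦ a i * x + b i) ρ n c =
      c + ((compose (List.ofFn fun i ↦ displacement (a (ρ i)) (b (ρ i)))).re +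
        (compose (List.ofFn fun i ↦ displacement (a (ρ i)) (b (ρ i)))).im * c) := by
  rw [← foldl_displacement, compSeq, List.take_of_length_le (by simp), List.ofFn_eq_map,
    List.foldl_map, List.foldl_map]
  congr! 3
  simp only [displacement]
  ring

lemma IsOptimal.compSeq_le {a b : Fin n → ℝ} {τ : Equiv.Perm (Fin n)}
    (h : IsOptimal (List.ofFn fun i ↦ displacement (a (τ i)) (b (τ i)))) (ρ : Equiv.Perm (Fin n))
    (c : ℝ) :
    compSeq (fun i x ↦ a i * x + b i) ρ n c ≤ compSeq (fun i x ↦ a i * x + b i) τ n c := by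
  have hperm (κ : Equiv.Perm (Fin n)) := κ.ofFn_comp_perm fun i ↦ displacement (a i) (b i)
  have hρτ := (hperm ρ).trans (hperm τ).symm
  have hre := h _ hρτ
  have him := im_compose_eq_of_perm hρτ
  simp only [Function.comp_def] at hre him
  rw [compSeq_eq, compSeq_eq, him]
  gcongr

lemma ofFn_comp_add_mod_eq_rotate {X : Type*} (hn : 0 < n) (g : Fin n → X) (k : ℕ) :
    List.ofFn (fun i : Fin n ↦ g ⟨(k + i) % n, Nat.mod_lt _ hn⟩) = (List.ofFn g).rotate k := by
  apply List.ext_getElem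
  · simp
  · intro i _ _
    simp [List.getElem_rotate, Nat.add_comm]

end Fin

/-- If `σ` is compatible with the lexicographic order on `(δ(fᵢ), γ(fᵢ))`, some cyclic
rotation `(σ(t), …, σ(n), σ(1), …, σ(t-1))` (1-indexed `t`) of `σ` is optimal for the
maximum total composition ordering problem. -/
theorem stmt18 (n : ℕ) (hn : 0 < n) (c : ℝ) (a b : Fin n → ℝ) (ha : ∀ i, 0 ≤ a i)
    (hnid : ∀ i, (a i, b i) ≠ (1, 0)) (σ : Equiv.Perm (Fin n))
    (hcompat : ∀ i j : Fin n, i < j →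
      del (a (σ i)) < del (a (σ j)) ∨
        (del (a (σ i)) = del (a (σ j)) ∧
          gam (a (σ i)) (b (σ i)) ≤ gam (a (σ j)) (b (σ j)))) :
    ∃ t : ℕ, 1 ≤ t ∧ t ≤ n ∧ ∃ τ : Equiv.Perm (Fin n),
      (∀ i : Fin n, τ i = σ ⟨(t - 1 + i.val) % n, Nat.mod_lt _ hn⟩) ∧
      ∀ ρ : Equiv.Perm (Fin n),
        compSeq (fun i x => a i * x + b i) ρ n c ≤
          compSeq (fun i x => a i * x + b i) τ n c := by
  let g (i : Fin n) : ℂ := displacement (a (σ i)) (b (σ i))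
  have hsorted : (List.ofFn g).Pairwise fun z w ↦ z.arg ≤ w.arg :=
    List.pairwise_ofFn.2 fun i j hij ↦
      arg_displacement_le_of_lex (hnid _) (hnid _) (hcompat i j hij)
  have hsweep : IsSweep (-π) (-π + 2 * π) (List.ofFn g) :=
    .of_pairwise_arg_le (by linarith [pi_pos])
      (fun z _ ↦ ⟨(neg_pi_lt_arg z).le, by linarith [arg_le_pi z]⟩) hsorted
  obtain ⟨r, hr, hopt⟩ := hsweep.exists_isRotated_isOptimal
    (by simpa [List.forall_mem_ofFn_iff] using fun i ↦ displacement_ne_zero (hnid (σ i)))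
    (by simpa [List.forall_mem_ofFn_iff, g, displacement] using fun i ↦ ha (σ i))
  obtain ⟨k, rfl⟩ := hr.symm
  have : NeZero n := ⟨hn.ne'⟩
  let τ : Equiv.Perm (Fin n) := (Equiv.addLeft (Fin.ofNat n k)).trans σ
  have hτ (i : Fin n) : τ i = σ ⟨(k % n + i) % n, Nat.mod_lt _ hn⟩ := rfl
  refine ⟨k % n + 1, by omega, Nat.mod_lt _ hn, τ, hτ, fun ρ ↦ IsOptimal.compSeq_le ?_ ρ c⟩
  simpa only [hτ, g, Nat.mod_add_mod, ofFn_comp_add_mod_eq_rotate hn g] using hopt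
end

section
/- Let a_1,…,a_n be positive integers and let T be a positive integer with ∑_{i=1}^n a_i = 2T. Define f_i : ℝ → ℝ by f_i(x) = x + a_i for i ∈ [n] and f_{n+1}(x) = min{2x, x/2 + 3T/2}. Then for every permutation σ of [n+1], letting l be the index with σ(l) = n+1 and q = ∑_{i=1}^{l−1} a_{σ(i)}, one has f_{σ(n+1)}∘⋯∘f_{σ(1)}(0) = min{q, 3T/2 − q/2} + 2T; in particular this value equals 3T if q = T and is at most 3T − 1/2 if q ≠ T. Consequently, the maximum over all permutations σ of [n+1] of f_{σ(n+1)}∘⋯∘f_{σ(1)}(0) equals 3T if there exists a subset I ⊆ [n] with ∑_{i∈I} a_i = T, and is at most 3T − 1/2 otherwise. -/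
/-- The functions of the Partition reduction: `f i x = x + a i` for `i ∈ [n]` and
`f (n+1) x = min (2x) (x/2 + 3T/2)`. -/
noncomputable def f19 (n : ℕ) (a : Fin n → ℕ) (T : ℕ) (i : Fin (n + 1)) (x : ℝ) : ℝ :=
  if h : i.val < n then x + a ⟨i.val, h⟩ else min (2 * x) (x / 2 + 3 * T / 2)

lemma compSeq_zero {m : ℕ} (f : Fin m → ℝ → ℝ) (σ : Fin m → Fin m) (c : ℝ) :
    compSeq f σ 0 c = c := by
  simp [compSeq]

lemma compSeq_succ {m : ℕ} (f : Fin m → ℝ → ℝ) (σ : Fin m → Fin m) (k : Fin m) (c : ℝ) :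
    compSeq f σ (k + 1) c = f (σ k) (compSeq f σ k c) := by
  simp [compSeq, List.take_add_one]

lemma compSeq_eq_add_sum_of_translations {m : ℕ} {f : Fin m → ℝ → ℝ} {σ : Fin m → Fin m}
    {w : Fin m → ℝ} {j k : ℕ} (hjk : j ≤ k) (hkm : k ≤ m)
    (hf : ∀ i : Fin m, j ≤ i → i < k → ∀ x, f (σ i) x = x + w i) (c : ℝ) :
    compSeq f σ k c = compSeq f σ j c + ∑ i : Fin m with j ≤ i.val ∧ i.val < k, w i := by
  induction k, hjk using Nat.le_induction with
  | base => simp [Finset.filter_false_of_mem]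
  | succ k hjk ih =>
    let i₀ : Fin m := ⟨k, hkm⟩
    have hinsert : ({i | j ≤ i.val ∧ i.val < k + 1} : Finset (Fin m)) =
        insert i₀ ({i | j ≤ i.val ∧ i.val < k} : Finset (Fin m)) := by
      ext i
      simp only [i₀, Finset.mem_filter_univ, Finset.mem_insert, Fin.ext_iff]
      omega
    rw [compSeq_succ f σ i₀, hf i₀ hjk k.lt_succ_self,
      ih (by omega) (fun i hji hik => hf i hji (by omega)), hinsert,
      Finset.sum_insert (by simp [i₀]), add_assoc, add_comm (w i₀)]

/-- The set of indices in `[n]` that the ordering `σ` of `[n+1]` places before `n+1`. It is a subset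
of `Fin n`, where `j : Fin n` stands for the index `j.castSucc` of `[n+1]` and `Fin.last n` for
`n+1`. -/
def beforeLast {n : ℕ} (σ : Equiv.Perm (Fin (n + 1))) : Finset (Fin n) :=
  {j | σ.symm j.castSucc < σ.symm (Fin.last n)}

section BeforeLast

variable {n : ℕ} {M : Type*} [AddCommMonoid M]

lemma sum_filter_perm_eq_sum_castSucc (σ : Equiv.Perm (Fin (n + 1))) (p : Fin (n + 1) → Prop)
    [DecidablePred p] (hp : ¬ p (σ.symm (Fin.last n))) (w : Fin (n + 1) → M) :
    ∑ i with p i, w (σ i) = ∑ j : Fin n with p (σ.symm j.castSucc), w j.castSucc := by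
  have hreindex := Equiv.sum_comp σ fun j => if p (σ.symm j) then w j else 0
  simp only [Equiv.symm_apply_apply] at hreindex
  simp [Finset.sum_filter, hreindex, Fin.sum_univ_castSucc, hp]

lemma sum_filter_lt_symm_last (σ : Equiv.Perm (Fin (n + 1))) (w : Fin (n + 1) → M) :
    ∑ i with i < σ.symm (Fin.last n), w (σ i) = ∑ j ∈ beforeLast σ, w j.castSucc :=
  sum_filter_perm_eq_sum_castSucc σ (· < σ.symm (Fin.last n)) (lt_irrefl _) w

lemma sum_filter_symm_last_lt (σ : Equiv.Perm (Fin (n + 1))) (w : Fin (n + 1) → M) :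
    ∑ i with σ.symm (Fin.last n) < i, w (σ i) = ∑ j ∈ (beforeLast σ)ᶜ, w j.castSucc := by
  have hcompl : (beforeLast σ)ᶜ =
      ({j | σ.symm (Fin.last n) < σ.symm j.castSucc} : Finset (Fin n)) := by
    ext j
    have hne : σ.symm (Fin.last n) ≠ σ.symm j.castSucc :=
      σ.symm.injective.ne (Fin.castSucc_ne_last j).symm
    simp [beforeLast, hne.le_iff_lt]
  rw [hcompl]
  exact sum_filter_perm_eq_sum_castSucc σ (σ.symm (Fin.last n) < ·) (lt_irrefl _) w

/-- Sorting by the key `0` on `I`, `1` at `n+1` and `2` elsewhere puts exactly `I` before `n+1`. -/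
lemma beforeLast_surjective : Function.Surjective (beforeLast (n := n)) := by
  intro I
  let key : Fin (n + 1) → ℕ := Fin.snoc (fun j => if j ∈ I then 0 else 2) 1
  have key_last : key (Fin.last n) = 1 := by simp [key]
  have key_castSucc (j : Fin n) : key j.castSucc = if j ∈ I then 0 else 2 := by simp [key]
  let σ := Tuple.sort key
  have lt_of_key_lt {x y : Fin (n + 1)} (h : key x < key y) : σ.symm x < σ.symm y :=
    (Tuple.monotone_sort key).reflect_lt (by simpa [σ] using h)
  refine ⟨σ, Finset.ext fun j => ?_⟩
  by_cases hj : j ∈ I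
  · simpa [beforeLast, hj] using lt_of_key_lt (by simp [key_last, key_castSucc, hj])
  · simpa [beforeLast, hj] using
      (lt_of_key_lt (x := Fin.last n) (y := j.castSucc) (by simp [key_last, key_castSucc, hj])).le

end BeforeLast

section OneNonTranslation

variable {n : ℕ} {f : Fin (n + 1) → ℝ → ℝ}

lemma compSeq_eq_of_translations {w : Fin n → ℝ} (hf : ∀ j x, f j.castSucc x = x + w j)
    (σ : Equiv.Perm (Fin (n + 1))) (c : ℝ) :
    compSeq f σ (n + 1) c =
      f (Fin.last n) (c + ∑ j ∈ beforeLast σ, w j) + ∑ j ∈ (beforeLast σ)ᶜ, w j := by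
  let w' : Fin (n + 1) → ℝ := Fin.snoc w 0
  let l := σ.symm (Fin.last n)
  have hw' (j : Fin n) : w' j.castSucc = w j := by simp [w']
  have htranslation (i : Fin (n + 1)) (hi : i ≠ l) (x : ℝ) : f (σ i) x = x + w' (σ i) := by
    obtain ⟨j, hj⟩ := Fin.exists_castSucc_eq.2 (mt σ.eq_symm_apply.2 hi)
    rw [← hj, hf, hw']
  have hprefix : compSeq f σ l c = c + ∑ j ∈ beforeLast σ, w j := by
    rw [compSeq_eq_add_sum_of_translations (w := w' ∘ σ) l.val.zero_le l.isLt.le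
      (fun i _ hil => htranslation i (Fin.ne_of_lt hil)), compSeq_zero]
    simpa [hw'] using sum_filter_lt_symm_last σ w'
  have hsuffix : compSeq f σ (n + 1) c = compSeq f σ (l + 1) c + ∑ j ∈ (beforeLast σ)ᶜ, w j := by
    rw [compSeq_eq_add_sum_of_translations (w := w' ∘ σ) l.isLt le_rfl
      (fun i hli _ => htranslation i (Fin.ne_of_gt hli))]
    simpa [hw', Nat.succ_le_iff, Fin.is_le] using sum_filter_symm_last_lt σ w'
  rw [hsuffix, compSeq_succ, hprefix, σ.apply_symm_apply]

lemma compSeq_eq_min_add {w : Fin n → ℝ} {T : ℝ} (hf : ∀ j x, f j.castSucc x = x + w j)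
    (hlast : ∀ x, f (Fin.last n) x = min (2 * x) (x / 2 + 3 * T / 2)) (hsum : ∑ j, w j = 2 * T)
    (σ : Equiv.Perm (Fin (n + 1))) :
    compSeq f σ (n + 1) 0 =
      min (∑ j ∈ beforeLast σ, w j) (3 * T / 2 - (∑ j ∈ beforeLast σ, w j) / 2) + 2 * T := by
  have hrest : ∑ j ∈ (beforeLast σ)ᶜ, w j = -∑ j ∈ beforeLast σ, w j + 2 * T := by
    rw [← hsum, ← Finset.sum_add_sum_compl (beforeLast σ) w, neg_add_cancel_left]
  rw [compSeq_eq_of_translations hf, hlast, zero_add, hrest, ← add_assoc, ← min_add_add_right]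
  congr 2 <;> ring

end OneNonTranslation

lemma tent_self (T : ℝ) : min T (3 * T / 2 - T / 2) + 2 * T = 3 * T := by
  rw [show 3 * T / 2 - T / 2 = T by ring, min_self]
  ring

lemma tent_le_sub_abs (q T : ℝ) : min q (3 * T / 2 - q / 2) + 2 * T ≤ 3 * T - |q - T| / 2 := by
  rcases abs_cases (q - T) with ⟨h, _⟩ | ⟨h, _⟩
  · linarith [min_le_right q (3 * T / 2 - q / 2)]
  · linarith [min_le_left q (3 * T / 2 - q / 2)]

lemma tent_le_sub_half_of_int_ne {q T : ℤ} (h : q ≠ T) :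
    min (q : ℝ) (3 * T / 2 - q / 2) + 2 * T ≤ 3 * T - 1 / 2 := by
  have hdist : (1 : ℝ) ≤ |(q : ℝ) - T| := mod_cast Int.one_le_abs (sub_ne_zero.2 h)
  linarith [tent_le_sub_abs q T]

theorem stmt19_general {n : ℕ} {f : Fin (n + 1) → ℝ → ℝ} {a : Fin n → ℤ} {T : ℤ}
    (hf : ∀ j x, f j.castSucc x = x + a j)
    (hlast : ∀ x, f (Fin.last n) x = min (2 * x) (x / 2 + 3 * T / 2))
    (hsum : ∑ j, a j = 2 * T) :
    (∀ σ : Equiv.Perm (Fin (n + 1)), ∀ q : ℝ,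
      q = ∑ i with i < σ.symm (Fin.last n),
            (if h : (σ i).val < n then (a ⟨(σ i).val, h⟩ : ℝ) else 0) →
      compSeq f σ (n + 1) 0 = min q (3 * T / 2 - q / 2) + 2 * T ∧
      (q = T → compSeq f σ (n + 1) 0 = 3 * T) ∧
      (q ≠ T → compSeq f σ (n + 1) 0 ≤ 3 * T - 1 / 2)) ∧
    ((∃ I : Finset (Fin n), ∑ j ∈ I, a j = T) →
      IsGreatest {v : ℝ | ∃ σ : Equiv.Perm (Fin (n + 1)), v = compSeq f σ (n + 1) 0} (3 * T)) ∧
    ((¬ ∃ I : Finset (Fin n), ∑ j ∈ I, a j = T) →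
      ∀ σ : Equiv.Perm (Fin (n + 1)), compSeq f σ (n + 1) 0 ≤ 3 * T - 1 / 2) := by
  have hvalue (σ : Equiv.Perm (Fin (n + 1))) : compSeq f σ (n + 1) 0 =
      min ((∑ j ∈ beforeLast σ, a j : ℤ) : ℝ) (3 * T / 2 - (∑ j ∈ beforeLast σ, a j : ℤ) / 2)
        + 2 * T := by
    simpa using compSeq_eq_min_add hf hlast (mod_cast hsum) σ
  refine ⟨fun σ q hq => ?_, fun ⟨I, hI⟩ => ⟨?_, ?_⟩, fun hno σ => ?_⟩
  · have hq_subset : q = (∑ j ∈ beforeLast σ, a j : ℤ) := by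
      simpa using hq.trans (sum_filter_lt_symm_last σ fun j =>
        if h : j.val < n then (a ⟨j.val, h⟩ : ℝ) else 0)
    rw [hvalue, ← hq_subset]
    refine ⟨rfl, fun hqT => hqT ▸ tent_self q, fun hne => ?_⟩
    rw [hq_subset] at hne ⊢
    exact tent_le_sub_half_of_int_ne (mod_cast hne)
  · obtain ⟨σ, rfl⟩ := beforeLast_surjective I
    exact ⟨σ, by rw [hvalue, hI, tent_self]⟩
  · rintro v ⟨σ, rfl⟩
    rw [hvalue]
    exact (tent_le_sub_abs _ _).trans (sub_le_self _ (by positivity))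
  · rw [hvalue]
    exact tent_le_sub_half_of_int_ne fun h => hno ⟨_, h⟩

theorem stmt19 (n : ℕ) (a : Fin n → ℕ) (T : ℕ) (ha : ∀ i, 0 < a i) (hT : 0 < T)
    (hsum : ∑ i, a i = 2 * T) :
    (∀ σ : Equiv.Perm (Fin (n + 1)), ∀ q : ℝ,
      q = ∑ i ∈ Finset.univ.filter (fun i => i < σ.symm (Fin.last n)),
            (if h : (σ i).val < n then ((a ⟨(σ i).val, h⟩ : ℕ) : ℝ) else 0) →
      compSeq (f19 n a T) σ (n + 1) 0 = min q (3 * T / 2 - q / 2) + 2 * T ∧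
      (q = T → compSeq (f19 n a T) σ (n + 1) 0 = 3 * T) ∧
      (q ≠ T → compSeq (f19 n a T) σ (n + 1) 0 ≤ 3 * T - 1 / 2)) ∧
    ((∃ I : Finset (Fin n), (∑ i ∈ I, a i) = T) →
      IsGreatest {v : ℝ | ∃ σ : Equiv.Perm (Fin (n + 1)),
        v = compSeq (f19 n a T) σ (n + 1) 0} (3 * T)) ∧
    ((¬ ∃ I : Finset (Fin n), (∑ i ∈ I, a i) = T) →
      ∀ σ : Equiv.Perm (Fin (n + 1)),
        compSeq (f19 n a T) σ (n + 1) 0 ≤ 3 * T - 1 / 2) := by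
  simpa [← Nat.cast_sum] using stmt19_general (f := f19 n a T) (a := fun j => (a j : ℤ)) (T := T)
    (by simp [f19]) (by simp [f19]) (mod_cast hsum)
end
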